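/- One-projection ε-band inclusion: let d ≥ 2, 0 < δ < r < R, D ≥ 0, and let φ : B_R^d → ℝ be a C² function whose second derivative has operator norm at most D at every point. Let β ∈ ℝ^d be a unit vector, p = −(r−δ)β, and let π be the projection layer with parameters (β, a = r−δ, c = ⟪β,∇φ(p)⟫). Then for every x ∈ ℝ^d with ‖x‖ ≤ r and ⟪β,x⟫ + (r−δ) < 0, the image π(x, φ(x)) lies in the ε-band Σ_φ^ε(P), where P = {z ∈ ℝ^d : ⟪β,z⟫ + (r−δ) = 0} and ε = (3D/√2)·(d−1)·√r·δ^(3/2). -/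

import Mathlib

open scoped RealInnerProductSpace

/-- The projection layer on `ℝ^d × ℝ` with parameters `(β, a, c)`:
`π(x,y) = (x + t(x)·β, y + t(x)·c)` where `t(x) = max(0, −(⟪β,x⟫ + a))`. -/
noncomputable def projLayer {d : ℕ} (β : EuclideanSpace ℝ (Fin d)) (a c : ℝ) :
    EuclideanSpace ℝ (Fin d) × ℝ → EuclideanSpace ℝ (Fin d) × ℝ :=
  fun p => (p.1 + max 0 (-(⟪β, p.1⟫ + a)) • β, p.2 + max 0 (-(⟪β, p.1⟫ + a)) * c)

/-- The `ε`-band of `f : Ω → ℝ` over `ω`: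
`Σ_f^ε(ω) = {(x,y) ∈ (Ω ∩ ω) × ℝ : |f(x) − y| ≤ ε}`. -/
def epsBand {d : ℕ} (f : EuclideanSpace ℝ (Fin d) → ℝ)
    (Ω ω : Set (EuclideanSpace ℝ (Fin d))) (ε : ℝ) :
    Set (EuclideanSpace ℝ (Fin d) × ℝ) :=
  {p | p.1 ∈ Ω ∩ ω ∧ |f p.1 - p.2| ≤ ε}

/-!
Write `q = x + tβ` for the projected point, `t = -(⟪β, x⟫ + (r - δ))`, so that `0 < t ≤ δ`.
Since `‖x‖ ≤ r` and `⟪β, x⟫ < -(r - δ)`, expanding squares shows that `x` and `q` both lie within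
`ρ = √(2rδ)` of `p`. The bound on the second derivative makes `Dφ` a `D`-Lipschitz map on the ball
(`norm_fderiv_sub_le`), hence `‖Dφ(z) - Dφ(p)‖ ≤ D ρ` on the convex set `B_R ∩ closedBall p ρ`, and
the mean value inequality gives
`|φ(q) - φ(x) - t Dφ(p)β| ≤ D ρ t ≤ D √2 √r δ^(3/2)` (`abs_sub_sub_fderiv_le`).
The claimed `ε` is at least this, because `√2 ≤ 3/√2` and `1 ≤ d - 1`.
-/

/-- On a ball where the second derivative is bounded by `D`, the first derivative is
`D`-Lipschitz. -/
lemma norm_fderiv_sub_le {E : Type*} [NormedAddCommGroup E] [NormedSpace ℝ E]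
    {φ : E → ℝ} {R D : ℝ} (hφ : ContDiffOn ℝ 2 φ (Metric.ball 0 R))
    (hφD : ∀ z ∈ Metric.ball (0 : E) R,
      ‖iteratedFDerivWithin ℝ 2 φ (Metric.ball 0 R) z‖ ≤ D)
    {p z : E} (hp : p ∈ Metric.ball (0 : E) R) (hz : z ∈ Metric.ball (0 : E) R) :
    ‖fderiv ℝ φ z - fderiv ℝ φ p‖ ≤ D * ‖z - p‖ := by
  have ho : IsOpen (Metric.ball (0 : E) R) := Metric.isOpen_ball
  rw [← fderivWithin_of_isOpen ho hz, ← fderivWithin_of_isOpen ho hp]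
  have hd : DifferentiableOn ℝ (fderivWithin ℝ φ (Metric.ball 0 R)) (Metric.ball 0 R) :=
    (hφ.fderivWithin ho.uniqueDiffOn (m := 1) (by norm_num)).differentiableOn (by norm_num)
  refine (convex_ball (0 : E) R).norm_image_sub_le_of_norm_fderivWithin_le hd (fun w hw => ?_) hp hz
  rw [← norm_iteratedFDerivWithin_one _ (ho.uniqueDiffOn w hw),
    norm_iteratedFDerivWithin_fderivWithin ho.uniqueDiffOn hw]
  exact hφD w hw

/-- First-order expansion between two points `x`, `y` using the derivative at a third point `p`
at distance at most `ρ` from both. -/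
lemma abs_sub_sub_fderiv_le {E : Type*} [NormedAddCommGroup E] [NormedSpace ℝ E]
    {φ : E → ℝ} {R D ρ : ℝ} (hD : 0 ≤ D) (hφ : ContDiffOn ℝ 2 φ (Metric.ball 0 R))
    (hφD : ∀ z ∈ Metric.ball (0 : E) R,
      ‖iteratedFDerivWithin ℝ 2 φ (Metric.ball 0 R) z‖ ≤ D)
    {p x y : E} (hp : p ∈ Metric.ball (0 : E) R) (hx : x ∈ Metric.ball (0 : E) R)
    (hy : y ∈ Metric.ball (0 : E) R) (hxp : ‖x - p‖ ≤ ρ) (hyp : ‖y - p‖ ≤ ρ) :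
    |φ y - φ x - fderiv ℝ φ p (y - x)| ≤ D * ρ * ‖y - x‖ := by
  have hconv : Convex ℝ (Metric.ball (0 : E) R ∩ Metric.closedBall p ρ) :=
    (convex_ball _ _).inter (convex_closedBall _ _)
  refine hconv.norm_image_sub_le_of_norm_hasFDerivWithin_le' (f' := fderiv ℝ φ)
    (fun z hz => ?_) (fun z hz => ?_) ⟨hx, mem_closedBall_iff_norm.2 hxp⟩
    ⟨hy, mem_closedBall_iff_norm.2 hyp⟩
  · exact ((hφ.differentiableOn (by norm_num)).differentiableAt
      (Metric.isOpen_ball.mem_nhds hz.1)).hasFDerivAt.hasFDerivWithinAt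
  · exact (norm_fderiv_sub_le hφ hφD hp hz.1).trans
      (mul_le_mul_of_nonneg_left (mem_closedBall_iff_norm.1 hz.2) hD)

/-- The bound `D √(2rδ) δ` delivered by the mean value inequality is at most `ε`. -/
lemma mvt_bound_le_eps {d : ℕ} (hd : 2 ≤ d) {δ r D : ℝ} (hδ : 0 < δ) (hr : 0 < r) (hD : 0 ≤ D) :
    D * √(2 * r * δ) * δ ≤
      (3 * D / √2) * ((d : ℝ) - 1) * √r * δ ^ ((3 : ℝ) / 2) := by
  have hd' : (1 : ℝ) ≤ (d : ℝ) - 1 := by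
    have : (2 : ℝ) ≤ d := by exact_mod_cast hd
    linarith
  have hpow : δ ^ ((3 : ℝ) / 2) = δ * √δ := by
    rw [show (3 : ℝ) / 2 = 1 + 1 / 2 by norm_num, Real.rpow_add hδ, Real.rpow_one,
      Real.sqrt_eq_rpow]
  have h2 : √2 ≤ 3 / √2 := by
    rw [le_div_iff₀ (by positivity), Real.mul_self_sqrt (by norm_num)]
    norm_num
  rw [hpow, Real.sqrt_mul (by positivity), Real.sqrt_mul (by norm_num)]
  calc D * (√2 * √r * √δ) * δ = √2 * 1 * (D * √r * (δ * √δ)) := by ring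
    _ ≤ 3 / √2 * ((d : ℝ) - 1) * (D * √r * (δ * √δ)) := by gcongr
    _ = _ := by ring

/-- **One-projection ε-band inclusion.** The projection layer with parameters
`(β, r−δ, ⟪β,∇φ(p)⟫)` maps every point of the graph of `φ` over the spherical cap
`{‖x‖ ≤ r, ⟪β,x⟫ + (r−δ) < 0}` into the `ε`-band of `φ` over the hyperplane
`P = {⟪β,z⟫ + (r−δ) = 0}`, with `ε = (3D/√2)·(d−1)·√r·δ^(3/2)`. -/
theorem one_projection_band_inclusion
    (d : ℕ) (hd : 2 ≤ d) (δ r R D : ℝ) (hδ : 0 < δ) (hδr : δ < r) (hrR : r < R) (hD : 0 ≤ D)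
    (φ : EuclideanSpace ℝ (Fin d) → ℝ)
    (hφ : ContDiffOn ℝ 2 φ (Metric.ball 0 R))
    (hφD : ∀ z ∈ Metric.ball (0 : EuclideanSpace ℝ (Fin d)) R,
      ‖iteratedFDerivWithin ℝ 2 φ (Metric.ball 0 R) z‖ ≤ D)
    (β : EuclideanSpace ℝ (Fin d)) (hβ : ‖β‖ = 1)
    (p : EuclideanSpace ℝ (Fin d)) (hp : p = -(r - δ) • β) :
    ∀ x : EuclideanSpace ℝ (Fin d), ‖x‖ ≤ r → ⟪β, x⟫ + (r - δ) < 0 →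
      projLayer β (r - δ) ⟪β, gradient φ p⟫ (x, φ x) ∈
        epsBand φ (Metric.ball 0 R) {z | ⟪β, z⟫ + (r - δ) = 0}
          ((3 * D / Real.sqrt 2) * ((d : ℝ) - 1) * Real.sqrt r * δ ^ ((3 : ℝ) / 2)) := by
  intro x hx hcap
  have hr : 0 < r := hδ.trans hδr
  set s : ℝ := ⟪β, x⟫ with hs
  set t : ℝ := -(s + (r - δ)) with ht
  have ht0 : 0 < t := by linarith
  have htδ : t ≤ δ := by
    have h := (abs_le.1 (abs_real_inner_le_norm β x)).1
    rw [hβ, one_mul] at h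
    linarith
  have hββ : ⟪β, β⟫ = 1 := by rw [real_inner_self_eq_norm_sq, hβ, one_pow]
  have hexp : ∀ u : ℝ, ‖x + u • β‖ ^ 2 = ‖x‖ ^ 2 + 2 * (u * s) + u ^ 2 := fun u => by
    rw [norm_add_sq_real, inner_smul_right, real_inner_comm, norm_smul, hβ, mul_one,
      Real.norm_eq_abs, sq_abs]
  have hx2 : ‖x‖ ^ 2 ≤ r ^ 2 := pow_le_pow_left₀ (norm_nonneg x) hx 2
  have hpR : p ∈ Metric.ball (0 : EuclideanSpace ℝ (Fin d)) R := by
    rw [mem_ball_zero_iff, hp, norm_smul, hβ, mul_one, norm_neg, Real.norm_eq_abs, abs_of_pos]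
      <;> linarith
  have hxR : x ∈ Metric.ball (0 : EuclideanSpace ℝ (Fin d)) R :=
    mem_ball_zero_iff.2 (hx.trans_lt hrR)
  have hqR : x + t • β ∈ Metric.ball (0 : EuclideanSpace ℝ (Fin d)) R := by
    refine mem_ball_zero_iff.2 (lt_of_le_of_lt (abs_le_of_sq_le_sq' ?_ hr.le).2 hrR)
    rw [hexp]
    nlinarith
  have hxp : ‖x - p‖ ≤ √(2 * r * δ) := by
    refine Real.le_sqrt_of_sq_le ?_
    rw [hp, neg_smul, sub_neg_eq_add, hexp]
    nlinarith
  have hqp : ‖x + t • β - p‖ ≤ √(2 * r * δ) := by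
    refine Real.le_sqrt_of_sq_le ?_
    rw [hp, neg_smul (r - δ), sub_neg_eq_add, add_assoc, ← add_smul, hexp]
    nlinarith
  have hmain := abs_sub_sub_fderiv_le hD hφ hφD hpR hxR hqR hxp hqp
  have hgrad : ⟪β, gradient φ p⟫ = fderiv ℝ φ p β := by
    rw [real_inner_comm, gradient, InnerProductSpace.toDual_symm_apply]
  rw [add_sub_cancel_left, map_smul, smul_eq_mul, norm_smul, hβ, mul_one, Real.norm_eq_abs,
    abs_of_pos ht0] at hmain
  have hmax : max 0 (-(⟪β, x⟫ + (r - δ))) = t := max_eq_right ht0.le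
  simp only [projLayer, epsBand, Set.mem_ofPred_eq, Set.mem_inter_iff, hmax, hgrad]
  refine ⟨⟨hqR, ?_⟩, ?_⟩
  · rw [inner_add_right, inner_smul_right, hββ]
    linarith
  · rw [← sub_sub]
    exact hmain.trans ((mul_le_mul_of_nonneg_left htδ (by positivity)).trans
      (mvt_bound_le_eps hd hδ hr hD))
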